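/- Correctness of Memo-at (Theorem 6): For every at-NFA A = (P, Q, q0, F, T), every input string w over Σ, and every position i ∈ {0, …, |w|}, Match-(la,at)_{A,w}(q0, i) = f(Memo-at^{M0}_{A,A,w}(q0, i)), where f converts results of Memo-at to results of Match-(la,at) by f(Failure(j)) = Failure and f(SuccessAt(i', K)) = SuccessAt(i'). -/

import Mathlib

namespace RegexMemo

/-! ## Generic runs, `φ`, `sub`, `sub*` -/

variable {α : Type}

/-- `φ_s(ℓ, n)`: the index of the result value of the call at index `ℓ`. -/
def phiAux (isRet : α → Bool) (s : List α) (ℓ n : ℕ) : Option ℕ :=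
  match h : s[ℓ]? with
  | none => none
  | some e =>
    if isRet e then
      if n ≤ 1 then some ℓ
      else phiAux isRet s (ℓ + 1) (n - 1)
    else phiAux isRet s (ℓ + 1) (n + 1)
termination_by s.length - ℓ
decreasing_by
  all_goals
    have hl : ℓ < s.length := by
      by_contra hc
      have : s[ℓ]? = none := List.getElem?_eq_none (by omega)
      simp [this] at h
    omega

/-- `φ_s(ℓ) = φ_s(ℓ, 0)`. -/
def phi (isRet : α → Bool) (s : List α) (ℓ : ℕ) : Option ℕ := phiAux isRet s ℓ 0

/-- `sub(s, ℓ)`: replace the memoization-table invocation at index `ℓ` (an element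
`M(q,i)` together with its immediately following result) by `C(q,i)` followed by the
subsequence `s[ℓ'+1] … s[φ_s(ℓ')]`, where `ℓ'` is the first index with `s[ℓ'] = C(q,i)`.
Here `m2c` maps a memoization element `M(q,i)` to the corresponding call element `C(q,i)`
(and everything else to `none`), and `isRet` recognizes result elements. -/
def subExpand [DecidableEq α] (m2c : α → Option α) (isRet : α → Bool)
    (s : List α) (ℓ : ℕ) : Option (List α) :=
  match s[ℓ]? with
  | some e =>
    match m2c e with
    | some c =>
      match s.findIdx? (· == c) with
      | some ℓ' =>
        match phi isRet s ℓ' with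
        | some m =>
          some (s.take ℓ ++ [c] ++ ((s.drop (ℓ' + 1)).take (m - ℓ')) ++ s.drop (ℓ + 2))
        | none => none
      | none => none
    | none => none
  | none => none

/-- `sub*`: repeatedly locate the first memoization element and expand it,
until no memoization element remains. `SubStar m2c isRet s t` means `sub*(s) = t`. -/
inductive SubStar [DecidableEq α] (m2c : α → Option α) (isRet : α → Bool) :
    List α → List α → Prop where
  | done {s : List α} : s.findIdx? (fun e => (m2c e).isSome) = none →
      SubStar m2c isRet s s
  | step {s s' t : List α} {ℓ : ℕ} :
      s.findIdx? (fun e => (m2c e).isSome) = some ℓ →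
      subExpand m2c isRet s ℓ = some s' →
      SubStar m2c isRet s' t →
      SubStar m2c isRet s t

/-- The number of (recursive) calls recorded in a run: the number of `C`/`M` elements. -/
def callCount (isCall : α → Bool) (s : List α) : ℕ := (s.filter isCall).length

variable {Sigma S : Type}

/-- Results of backtracking matching: `SuccessAt i'` or `Failure`. -/
inductive Result : Type where
  | successAt : ℕ → Result
  | failure : Result
deriving DecidableEq

/-! ## Plain NFAs -/

/-- Transitions of a plain NFA. -/
inductive Trans (Sigma S : Type) : Type where
  | eps : S → Trans Sigma S
  | branch : S → S → Trans Sigma S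
  | char : Sigma → S → Trans Sigma S

/-- A (plain) NFA over the alphabet `Sigma` with (finite) state type `S`:
an initial state, a set of accepting states, and a transition function
(whose value is only relevant on non-accepting states). -/
structure NFA (Sigma S : Type) where
  q0 : S
  F : Set S
  T : S → Trans Sigma S

/-- One ε-step: an `Eps` or `Branch` transition of a non-accepting state. -/
def NFA.epsStep (A : NFA Sigma S) (q q' : S) : Prop :=
  q ∉ A.F ∧ (A.T q = Trans.eps q' ∨ (∃ q'', A.T q = Trans.branch q' q'') ∨
    (∃ q'', A.T q = Trans.branch q'' q'))

/-- The NFA has no ε-loops. -/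
def NFA.NoEpsLoops (A : NFA Sigma S) : Prop :=
  ∀ q : S, ¬ Relation.TransGen A.epsStep q q

open Classical in
/-- The in-degree `#in(q)` of a state of a plain NFA. -/
noncomputable def NFA.inDeg [Fintype S] (A : NFA Sigma S) (q : S) : ℕ :=
  (Finset.univ.filter fun q' : S => q' ∉ A.F ∧ A.T q' = Trans.eps q).card +
  (Finset.univ.filter fun q' : S => q' ∉ A.F ∧ ∃ σ, A.T q' = Trans.char σ q).card +
  (Finset.univ.filter fun q' : S => q' ∉ A.F ∧ ∃ q'', A.T q' = Trans.branch q q'').card +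
  (Finset.univ.filter fun q' : S => q' ∉ A.F ∧ ∃ q'', A.T q' = Trans.branch q'' q).card +
  (if q = A.q0 then 1 else 0)

/-- The maximal in-degree `#in(A)` of a plain NFA. -/
noncomputable def NFA.inDegMax [Fintype S] (A : NFA Sigma S) : ℕ :=
  Finset.univ.sup fun q : S => A.inDeg q

/-- Elements of runs of `Match`/`Memo`: calls `C(q,i)`, memoization-table invocations
`M(q,i)`, and results `S(i')` and `F`. -/
inductive RunElem (S : Type) : Type where
  | call : S → ℕ → RunElem S
  | memo : S → ℕ → RunElem S
  | succ : ℕ → RunElem S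
  | fail : RunElem S
deriving DecidableEq

/-- The run element recording the return of a result. -/
def Result.elem {S : Type} : Result → RunElem S
  | .successAt i => .succ i
  | .failure => .fail

def RunElem.isRet : RunElem S → Bool
  | .succ _ => true
  | .fail => true
  | _ => false

def RunElem.isCall : RunElem S → Bool
  | .call _ _ => true
  | .memo _ _ => true
  | _ => false

/-- `M(q,i) ↦ C(q,i)`. -/
def memoToCall : RunElem S → Option (RunElem S)
  | .memo q i => some (.call q i)
  | _ => none

/-- Big-step semantics (together with the produced run) of the backtracking
matching algorithm `Match` for plain NFAs:
`MatchRun A w q i r s` means the call `Match_{A,w}(q, i)` terminates with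
result `r` and produces the run `s`. -/
inductive MatchRun (A : NFA Sigma S) (w : List Sigma) :
    S → ℕ → Result → List (RunElem S) → Prop where
  | accept {q : S} {i : ℕ} : q ∈ A.F →
      MatchRun A w q i (.successAt i) [.call q i, .succ i]
  | eps {q q' : S} {i : ℕ} {r : Result} {s : List (RunElem S)} :
      q ∉ A.F → A.T q = Trans.eps q' →
      MatchRun A w q' i r s →
      MatchRun A w q i r (.call q i :: s ++ [r.elem])
  | branchSucc {q q' q'' : S} {i i' : ℕ} {s : List (RunElem S)} :
      q ∉ A.F → A.T q = Trans.branch q' q'' →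
      MatchRun A w q' i (.successAt i') s →
      MatchRun A w q i (.successAt i') (.call q i :: s ++ [RunElem.succ i'])
  | branchFail {q q' q'' : S} {i : ℕ} {r : Result} {s s' : List (RunElem S)} :
      q ∉ A.F → A.T q = Trans.branch q' q'' →
      MatchRun A w q' i .failure s →
      MatchRun A w q'' i r s' →
      MatchRun A w q i r (.call q i :: s ++ s' ++ [r.elem])
  | charSucc {q q' : S} {σ : Sigma} {i : ℕ} {r : Result} {s : List (RunElem S)} :
      q ∉ A.F → A.T q = Trans.char σ q' →
      w[i]? = some σ →
      MatchRun A w q' (i + 1) r s →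
      MatchRun A w q i r (.call q i :: s ++ [r.elem])
  | charFail {q q' : S} {σ : Sigma} {i : ℕ} :
      q ∉ A.F → A.T q = Trans.char σ q' →
      w[i]? ≠ some σ →
      MatchRun A w q i .failure [.call q i, .fail]

/-- Record `M(q,i) := Failure` in the memoization table if the result is a failure. -/
def recFail [DecidableEq S] (M : S × ℕ → Bool) (q : S) (i : ℕ) : Result → (S × ℕ → Bool)
  | .failure => fun p => if p = (q, i) then true else M p
  | _ => M

/-- Big-step semantics (with resulting memoization table and produced run) of the
memoized backtracking matching algorithm `Memo` for plain NFAs: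
`MemoRun A w q i M M' r s` means the call `Memo^M_{A,w}(q, i)` terminates with result
`r`, final memoization table `M'` (where `M p = true` means `Failure` is recorded at the
key `p`), and produces the run `s`. -/
inductive MemoRun [DecidableEq S] (A : NFA Sigma S) (w : List Sigma) :
    S → ℕ → (S × ℕ → Bool) → (S × ℕ → Bool) → Result → List (RunElem S) → Prop where
  | memoHit {q : S} {i : ℕ} {M : S × ℕ → Bool} : M (q, i) = true →
      MemoRun A w q i M M .failure [.memo q i, .fail]
  | accept {q : S} {i : ℕ} {M : S × ℕ → Bool} : M (q, i) = false → q ∈ A.F →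
      MemoRun A w q i M M (.successAt i) [.call q i, .succ i]
  | eps {q q' : S} {i : ℕ} {M M' : S × ℕ → Bool} {r : Result} {s : List (RunElem S)} :
      M (q, i) = false → q ∉ A.F → A.T q = Trans.eps q' →
      MemoRun A w q' i M M' r s →
      MemoRun A w q i M (recFail M' q i r) r (.call q i :: s ++ [r.elem])
  | branchSucc {q q' q'' : S} {i i' : ℕ} {M M' : S × ℕ → Bool} {s : List (RunElem S)} :
      M (q, i) = false → q ∉ A.F → A.T q = Trans.branch q' q'' →
      MemoRun A w q' i M M' (.successAt i') s →
      MemoRun A w q i M M' (.successAt i') (.call q i :: s ++ [RunElem.succ i'])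
  | branchFail {q q' q'' : S} {i : ℕ} {M M' M'' : S × ℕ → Bool} {r : Result}
      {s s' : List (RunElem S)} :
      M (q, i) = false → q ∉ A.F → A.T q = Trans.branch q' q'' →
      MemoRun A w q' i M M' .failure s →
      MemoRun A w q'' i M' M'' r s' →
      MemoRun A w q i M (recFail M'' q i r) r (.call q i :: s ++ s' ++ [r.elem])
  | charSucc {q q' : S} {σ : Sigma} {i : ℕ} {M M' : S × ℕ → Bool} {r : Result}
      {s : List (RunElem S)} :
      M (q, i) = false → q ∉ A.F → A.T q = Trans.char σ q' →
      w[i]? = some σ →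
      MemoRun A w q' (i + 1) M M' r s →
      MemoRun A w q i M (recFail M' q i r) r (.call q i :: s ++ [r.elem])
  | charFail {q q' : S} {σ : Sigma} {i : ℕ} {M : S × ℕ → Bool} :
      M (q, i) = false → q ∉ A.F → A.T q = Trans.char σ q' →
      w[i]? ≠ some σ →
      MemoRun A w q i M (recFail M q i .failure) .failure [.call q i, .fail]

/-! ## NFAs with sub-automata -/

/-- Kind labels of sub-automaton transitions: positive/negative look-ahead/look-behind
and atomic grouping. -/
inductive Kind : Type where
  | pla | nla | plb | nlb | at
deriving DecidableEq

mutual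
/-- An NFA with sub-automata `⟨Q, q0, F, T⟩`: a list of top-level states, an initial
state, accepting states, and a transition function (relevant on non-accepting top-level
states) whose transitions may be labelled with further NFAs with sub-automata. -/
inductive SubNFA (Sigma S : Type) : Type where
  | mk : List S → S → List S → (S → SubTrans Sigma S) → SubNFA Sigma S

/-- Transitions of an NFA with sub-automata. -/
inductive SubTrans (Sigma S : Type) : Type where
  | eps : S → SubTrans Sigma S
  | branch : S → S → SubTrans Sigma S
  | char : Sigma → S → SubTrans Sigma S
  | sub : Kind → SubNFA Sigma S → S → SubTrans Sigma S
end

/-- Top-level states `Q`. -/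
def SubNFA.Q : SubNFA Sigma S → List S
  | .mk Q _ _ _ => Q

/-- Initial state `q0`. -/
def SubNFA.q0 : SubNFA Sigma S → S
  | .mk _ q0 _ _ => q0

/-- Accepting states `F`. -/
def SubNFA.F : SubNFA Sigma S → List S
  | .mk _ _ F _ => F

/-- Transition function `T`. -/
def SubNFA.T : SubNFA Sigma S → S → SubTrans Sigma S
  | .mk _ _ _ T => T

mutual
/-- All automata occurring within an NFA with sub-automata (including itself), each
together with its nesting depth of atomic grouping (the number of enclosing
`at`-sub-automaton boundaries). -/
def SubNFA.compsD : SubNFA Sigma S → List (SubNFA Sigma S × ℕ)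
  | .mk Q q0 F T => (.mk Q q0 F T, 0) :: Q.flatMap (fun q => SubTrans.subCompsD (T q))

def SubTrans.subCompsD : SubTrans Sigma S → List (SubNFA Sigma S × ℕ)
  | .sub k A' _ => (SubNFA.compsD A').map (fun p => (p.1, p.2 + (if k = Kind.at then 1 else 0)))
  | _ => []
end

/-- All automata occurring within `A` (including `A` itself). -/
def SubNFA.comps (A : SubNFA Sigma S) : List (SubNFA Sigma S) :=
  A.compsD.map Prod.fst

/-- The set (list) of all states `P` occurring within `A`. -/
def SubNFA.allStates (A : SubNFA Sigma S) : List S :=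
  A.comps.flatMap SubNFA.Q

/-- The nesting depth of atomic grouping `ν_A(q)` of a state `q` of `A`. -/
def SubNFA.nu [DecidableEq S] (A : SubNFA Sigma S) (q : S) : ℕ :=
  (A.compsD.map (fun p => if q ∈ p.1.Q then p.2 else 0)).sum

/-- The maximal nesting depth of atomic grouping `ν(A)`. -/
def SubNFA.nuMax [DecidableEq S] (A : SubNFA Sigma S) : ℕ :=
  (A.allStates.map A.nu).foldr max 0

/-- Local wellformedness of one automaton: the initial state is a top-level state,
accepting states are top-level states, and transitions of non-accepting top-level
states lead to top-level states. -/
def SubNFA.LocalOK (B : SubNFA Sigma S) : Prop :=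
  B.q0 ∈ B.Q ∧ (∀ f ∈ B.F, f ∈ B.Q) ∧ ∀ q ∈ B.Q, q ∉ B.F →
    match B.T q with
    | .eps q' => q' ∈ B.Q
    | .branch q' q'' => q' ∈ B.Q ∧ q'' ∈ B.Q
    | .char _ q' => q' ∈ B.Q
    | .sub _ _ q' => q' ∈ B.Q

/-- Wellformedness of an NFA with sub-automata: every component automaton is locally
wellformed, and all the state lists are disjoint and duplicate-free (so that `P` is
the disjoint union of the top-level state sets of all components). -/
def SubNFA.WF (A : SubNFA Sigma S) : Prop :=
  (∀ B ∈ A.comps, B.LocalOK) ∧ A.allStates.Nodup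

/-- The kind labels of all sub-automaton transitions occurring in `A`. -/
def SubNFA.kinds [DecidableEq S] (A : SubNFA Sigma S) : List Kind :=
  A.comps.flatMap fun B =>
    (B.Q.filter (fun q => decide (q ∉ B.F))).filterMap fun q =>
      match B.T q with
      | .sub k _ _ => some k
      | _ => none

/-- A la-NFA: all kind labels are look-around labels (for simplicity, only positive
look-ahead `pla` is treated). -/
def SubNFA.IsLaNFA [DecidableEq S] (A : SubNFA Sigma S) : Prop :=
  ∀ k ∈ A.kinds, k = Kind.pla

/-- An at-NFA: all kind labels are `at` (atomic grouping). -/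
def SubNFA.IsAtNFA [DecidableEq S] (A : SubNFA Sigma S) : Prop :=
  ∀ k ∈ A.kinds, k = Kind.at

/-- A (la,at)-NFA in which (for simplicity) only the kinds `pla` and `at` occur. -/
def SubNFA.IsLaAtNFA [DecidableEq S] (A : SubNFA Sigma S) : Prop :=
  ∀ k ∈ A.kinds, k = Kind.pla ∨ k = Kind.at

/-- One global ε-step of an NFA with sub-automata: an `Eps` or `Branch` transition, or a
`Sub` transition with a look-around kind (from the transition's source to its successor),
of a non-accepting top-level state of any component automaton. -/
def SubNFA.epsStep (A : SubNFA Sigma S) (q q' : S) : Prop :=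
  ∃ B ∈ A.comps, q ∈ B.Q ∧ q ∉ B.F ∧
    (B.T q = SubTrans.eps q' ∨
     (∃ q'', B.T q = SubTrans.branch q' q'') ∨
     (∃ q'', B.T q = SubTrans.branch q'' q') ∨
     (∃ k A'', B.T q = SubTrans.sub k A'' q' ∧ k ≠ Kind.at))

/-- The NFA with sub-automata has no ε-loops. -/
def SubNFA.NoEpsLoops (A : SubNFA Sigma S) : Prop :=
  ∀ q : S, ¬ Relation.TransGen A.epsStep q q

/-- All pairs (state, transition) of non-accepting top-level states of all component
automata of `A`. -/
def SubNFA.allTransNF [DecidableEq S] (A : SubNFA Sigma S) : List (S × SubTrans Sigma S) :=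
  A.comps.flatMap fun B => (B.Q.filter (fun q => decide (q ∉ B.F))).map fun q => (q, B.T q)

/-- How many of the buckets in the definition of the in-degree of `q` a given
transition contributes to. -/
def SubTrans.hits [DecidableEq S] (t : SubTrans Sigma S) (q : S) : ℕ :=
  match t with
  | .eps q' => if q' = q then 1 else 0
  | .char _ q' => if q' = q then 1 else 0
  | .branch q' q'' => (if q' = q then 1 else 0) + (if q'' = q then 1 else 0)
  | .sub _ _ q' => if q' = q then 1 else 0

/-- The in-degree `#in(q)` of a state of an NFA with sub-automata. -/
def SubNFA.inDeg [DecidableEq S] (A : SubNFA Sigma S) (q : S) : ℕ :=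
  (A.allTransNF.map (fun p => p.2.hits q)).sum +
  (if q ∈ A.comps.map SubNFA.q0 then 1 else 0)

/-- The maximal in-degree `#in(A)`. -/
def SubNFA.inDegMax [DecidableEq S] (A : SubNFA Sigma S) : ℕ :=
  (A.allStates.map A.inDeg).foldr max 0

/-! ## run elements for `Memo-la` and `Match-(la,at)` -/

/-- Elements of runs of `Memo-la` (and of `Match-(la,at)`): calls `C(q,i)`,
memoization-table invocations `M(q,i)`, and the results `S(i')`, `S'` (bare success),
and `F`. -/
inductive LaRunElem (S : Type) : Type where
  | call : S → ℕ → LaRunElem S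
  | memo : S → ℕ → LaRunElem S
  | succAt : ℕ → LaRunElem S
  | succ : LaRunElem S
  | fail : LaRunElem S
deriving DecidableEq

def LaRunElem.isRet : LaRunElem S → Bool
  | .succAt _ => true
  | .succ => true
  | .fail => true
  | _ => false

def LaRunElem.isCall : LaRunElem S → Bool
  | .call _ _ => true
  | .memo _ _ => true
  | _ => false

def laMemoToCall : LaRunElem S → Option (LaRunElem S)
  | .memo q i => some (.call q i)
  | _ => none

def Result.laElem {S : Type} : Result → LaRunElem S
  | .successAt i => .succAt i
  | .failure => .fail

/-! ## The backtracking matching algorithm `Match-(la,at)` -/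

/-- Big-step semantics (with produced run) of the backtracking matching algorithm
`Match-(la,at)` for NFAs with sub-automata: `LAMatchRun w A q i r s` means the call
`Match-(la,at)_{A,w}(q, i)` terminates with result `r` and produces the run `s`.
For simplicity, only the look-around kind `pla` (besides `at`) is treated. -/
inductive LAMatchRun (w : List Sigma) :
    SubNFA Sigma S → S → ℕ → Result → List (LaRunElem S) → Prop where
  | accept {A : SubNFA Sigma S} {q : S} {i : ℕ} : q ∈ A.F →
      LAMatchRun w A q i (.successAt i) [.call q i, .succAt i]
  | eps {A : SubNFA Sigma S} {q q' : S} {i : ℕ} {r : Result} {s : List (LaRunElem S)} :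
      q ∉ A.F → A.T q = SubTrans.eps q' →
      LAMatchRun w A q' i r s →
      LAMatchRun w A q i r (.call q i :: s ++ [r.laElem])
  | branchSucc {A : SubNFA Sigma S} {q q' q'' : S} {i i' : ℕ} {s : List (LaRunElem S)} :
      q ∉ A.F → A.T q = SubTrans.branch q' q'' →
      LAMatchRun w A q' i (.successAt i') s →
      LAMatchRun w A q i (.successAt i') (.call q i :: s ++ [LaRunElem.succAt i'])
  | branchFail {A : SubNFA Sigma S} {q q' q'' : S} {i : ℕ} {r : Result}
      {s s' : List (LaRunElem S)} :
      q ∉ A.F → A.T q = SubTrans.branch q' q'' →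
      LAMatchRun w A q' i .failure s →
      LAMatchRun w A q'' i r s' →
      LAMatchRun w A q i r (.call q i :: s ++ s' ++ [r.laElem])
  | charSucc {A : SubNFA Sigma S} {q q' : S} {σ : Sigma} {i : ℕ} {r : Result}
      {s : List (LaRunElem S)} :
      q ∉ A.F → A.T q = SubTrans.char σ q' →
      w[i]? = some σ →
      LAMatchRun w A q' (i + 1) r s →
      LAMatchRun w A q i r (.call q i :: s ++ [r.laElem])
  | charFail {A : SubNFA Sigma S} {q q' : S} {σ : Sigma} {i : ℕ} :
      q ∉ A.F → A.T q = SubTrans.char σ q' →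
      w[i]? ≠ some σ →
      LAMatchRun w A q i .failure [.call q i, .fail]
  | plaSucc {A A' : SubNFA Sigma S} {q q' : S} {i i' : ℕ} {r : Result}
      {s1 s2 : List (LaRunElem S)} :
      q ∉ A.F → A.T q = SubTrans.sub Kind.pla A' q' →
      LAMatchRun w A' A'.q0 i (.successAt i') s1 →
      LAMatchRun w A q' i r s2 →
      LAMatchRun w A q i r (.call q i :: s1 ++ s2 ++ [r.laElem])
  | plaFail {A A' : SubNFA Sigma S} {q q' : S} {i : ℕ} {s1 : List (LaRunElem S)} :
      q ∉ A.F → A.T q = SubTrans.sub Kind.pla A' q' →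
      LAMatchRun w A' A'.q0 i .failure s1 →
      LAMatchRun w A q i .failure (.call q i :: s1 ++ [LaRunElem.fail])
  | atSucc {A A' : SubNFA Sigma S} {q q' : S} {i i' : ℕ} {r : Result}
      {s1 s2 : List (LaRunElem S)} :
      q ∉ A.F → A.T q = SubTrans.sub Kind.at A' q' →
      LAMatchRun w A' A'.q0 i (.successAt i') s1 →
      LAMatchRun w A q' i' r s2 →
      LAMatchRun w A q i r (.call q i :: s1 ++ s2 ++ [r.laElem])
  | atFail {A A' : SubNFA Sigma S} {q q' : S} {i : ℕ} {s1 : List (LaRunElem S)} :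
      q ∉ A.F → A.T q = SubTrans.sub Kind.at A' q' →
      LAMatchRun w A' A'.q0 i .failure s1 →
      LAMatchRun w A q i .failure (.call q i :: s1 ++ [LaRunElem.fail])

/-! ## `Memo-la` -/

/-- Values of the memoization table of `Memo-la`: `Failure` or `Success`. -/
inductive LaVal : Type where
  | success : LaVal
  | failure : LaVal
deriving DecidableEq

/-- Results of `Memo-la`: `SuccessAt i'`, bare `Success`, or `Failure`. -/
inductive LaResult : Type where
  | successAt : ℕ → LaResult
  | success : LaResult
  | failure : LaResult
deriving DecidableEq

def LaVal.toResult : LaVal → LaResult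
  | .success => .success
  | .failure => .failure

def LaResult.elem {S : Type} : LaResult → LaRunElem S
  | .successAt i => .succAt i
  | .success => .succ
  | .failure => .fail

def Result.toLa : Result → LaResult
  | .successAt i => .successAt i
  | .failure => .failure

/-- The final recording of `Memo-la`: `M(q,i) := Success` if the result is
`SuccessAt i'` or `Success`, and `M(q,i) := Failure` if the result is `Failure`. -/
def laRecord [DecidableEq S] (M : S × ℕ → Option LaVal) (q : S) (i : ℕ) (r : LaResult) :
    S × ℕ → Option LaVal :=
  fun p => if p = (q, i) then
    some (match r with | .failure => LaVal.failure | _ => LaVal.success)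
  else M p

/-- Big-step semantics (with resulting memoization table and produced run) of the
memoized backtracking matching algorithm `Memo-la` for la-NFAs:
`MemoLaRun w A q i M M' r s` means the call `Memo-la^M_{A,w}(q, i)` terminates with
result `r`, final memoization table `M'`, and produces the run `s`. The memoization
table is shared between the top-level automaton and all sub-automata. -/
inductive MemoLaRun [DecidableEq S] (w : List Sigma) :
    SubNFA Sigma S → S → ℕ → (S × ℕ → Option LaVal) → (S × ℕ → Option LaVal) →
    LaResult → List (LaRunElem S) → Prop where
  | memoHit {A : SubNFA Sigma S} {q : S} {i : ℕ} {M : S × ℕ → Option LaVal} {v : LaVal} :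
      M (q, i) = some v →
      MemoLaRun w A q i M M v.toResult [.memo q i, v.toResult.elem]
  | accept {A : SubNFA Sigma S} {q : S} {i : ℕ} {M : S × ℕ → Option LaVal} :
      M (q, i) = none → q ∈ A.F →
      MemoLaRun w A q i M (laRecord M q i (.successAt i)) (.successAt i)
        [.call q i, .succAt i]
  | eps {A : SubNFA Sigma S} {q q' : S} {i : ℕ} {M M' : S × ℕ → Option LaVal}
      {r : LaResult} {s : List (LaRunElem S)} :
      M (q, i) = none → q ∉ A.F → A.T q = SubTrans.eps q' →
      MemoLaRun w A q' i M M' r s →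
      MemoLaRun w A q i M (laRecord M' q i r) r (.call q i :: s ++ [r.elem])
  | branchNoFail {A : SubNFA Sigma S} {q q' q'' : S} {i : ℕ}
      {M M' : S × ℕ → Option LaVal} {r : LaResult} {s : List (LaRunElem S)} :
      M (q, i) = none → q ∉ A.F → A.T q = SubTrans.branch q' q'' →
      MemoLaRun w A q' i M M' r s → r ≠ .failure →
      MemoLaRun w A q i M (laRecord M' q i r) r (.call q i :: s ++ [r.elem])
  | branchFail {A : SubNFA Sigma S} {q q' q'' : S} {i : ℕ}
      {M M1 M2 : S × ℕ → Option LaVal} {r : LaResult} {s1 s2 : List (LaRunElem S)} :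
      M (q, i) = none → q ∉ A.F → A.T q = SubTrans.branch q' q'' →
      MemoLaRun w A q' i M M1 .failure s1 →
      MemoLaRun w A q'' i M1 M2 r s2 →
      MemoLaRun w A q i M (laRecord M2 q i r) r (.call q i :: s1 ++ s2 ++ [r.elem])
  | charSucc {A : SubNFA Sigma S} {q q' : S} {σ : Sigma} {i : ℕ}
      {M M' : S × ℕ → Option LaVal} {r : LaResult} {s : List (LaRunElem S)} :
      M (q, i) = none → q ∉ A.F → A.T q = SubTrans.char σ q' →
      w[i]? = some σ →
      MemoLaRun w A q' (i + 1) M M' r s →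
      MemoLaRun w A q i M (laRecord M' q i r) r (.call q i :: s ++ [r.elem])
  | charFail {A : SubNFA Sigma S} {q q' : S} {σ : Sigma} {i : ℕ}
      {M : S × ℕ → Option LaVal} :
      M (q, i) = none → q ∉ A.F → A.T q = SubTrans.char σ q' →
      w[i]? ≠ some σ →
      MemoLaRun w A q i M (laRecord M q i .failure) .failure [.call q i, .fail]
  | plaSucc {A A' : SubNFA Sigma S} {q q' : S} {i : ℕ}
      {M M1 M2 : S × ℕ → Option LaVal} {r1 r : LaResult} {s1 s2 : List (LaRunElem S)} :
      M (q, i) = none → q ∉ A.F → A.T q = SubTrans.sub Kind.pla A' q' →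
      MemoLaRun w A' A'.q0 i M M1 r1 s1 → r1 ≠ .failure →
      MemoLaRun w A q' i M1 M2 r s2 →
      MemoLaRun w A q i M (laRecord M2 q i r) r (.call q i :: s1 ++ s2 ++ [r.elem])
  | plaFail {A A' : SubNFA Sigma S} {q q' : S} {i : ℕ}
      {M M1 : S × ℕ → Option LaVal} {s1 : List (LaRunElem S)} :
      M (q, i) = none → q ∉ A.F → A.T q = SubTrans.sub Kind.pla A' q' →
      MemoLaRun w A' A'.q0 i M M1 .failure s1 →
      MemoLaRun w A q i M (laRecord M1 q i .failure) .failure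
        (.call q i :: s1 ++ [LaRunElem.fail])

/-! ## `Memo-at` -/

/-- Results of `Memo-at`: `SuccessAt(i', K)` with a set `K` of delayed memoization keys,
or `Failure(j)` with a nesting depth `j`. -/
inductive AtResult (S : Type) : Type where
  | successAt : ℕ → Finset (S × ℕ) → AtResult S
  | failure : ℕ → AtResult S

/-- Elements of runs of `Memo-at`: calls `C(q,i)`, memoization-table invocations
`M(q,i)`, and results `S(i')` and `F(j)`. -/
inductive AtRunElem (S : Type) : Type where
  | call : S → ℕ → AtRunElem S
  | memo : S → ℕ → AtRunElem S
  | succ : ℕ → AtRunElem S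
  | fail : ℕ → AtRunElem S
deriving DecidableEq

def AtRunElem.isRet : AtRunElem S → Bool
  | .succ _ => true
  | .fail _ => true
  | _ => false

def AtRunElem.isCall : AtRunElem S → Bool
  | .call _ _ => true
  | .memo _ _ => true
  | _ => false

def atMemoToCall : AtRunElem S → Option (AtRunElem S)
  | .memo q i => some (.call q i)
  | _ => none

def AtResult.elem {S : Type} : AtResult S → AtRunElem S
  | .successAt i _ => .succ i
  | .failure j => .fail j

/-- `f`, converting results of `Memo-at` to results of `Match-(la,at)`. -/
def AtResult.toResult {S : Type} : AtResult S → Result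
  | .successAt i _ => .successAt i
  | .failure _ => .failure

/-- The final step of `Memo-at`: on success, the key `(q,i)` is added to the set of
delayed keys. -/
def atFinal [DecidableEq S] (q : S) (i : ℕ) : AtResult S → AtResult S
  | .successAt i' K => .successAt i' (insert (q, i) K)
  | .failure j => .failure j

/-- The final recording of `Memo-at`: `M(q,i) := Failure(j)` if the result is
`Failure(j)`. -/
def atRecord [DecidableEq S] (M : S × ℕ → Option ℕ) (q : S) (i : ℕ) :
    AtResult S → (S × ℕ → Option ℕ)
  | .failure j => fun p => if p = (q, i) then some j else M p
  | _ => M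

/-- Batch recording `M(k) := Failure(j)` for every `k ∈ K`. -/
def atBatch [DecidableEq S] (M : S × ℕ → Option ℕ) (K : Finset (S × ℕ)) (j : ℕ) :
    S × ℕ → Option ℕ :=
  fun p => if p ∈ K then some j else M p

/-- Big-step semantics (with resulting memoization table and produced run) of the
memoized backtracking matching algorithm `Memo-at` for at-NFAs:
`MemoAtRun A0 w A q i M M' r s` means the call `Memo-at^M_{A0,A,w}(q, i)` (with the
whole automaton `A0` and current sub-automaton `A`) terminates with result `r`, final
memoization table `M'`, and produces the run `s`. -/
inductive MemoAtRun [DecidableEq S] (A0 : SubNFA Sigma S) (w : List Sigma) :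
    SubNFA Sigma S → S → ℕ → (S × ℕ → Option ℕ) → (S × ℕ → Option ℕ) →
    AtResult S → List (AtRunElem S) → Prop where
  | memoHit {A : SubNFA Sigma S} {q : S} {i j : ℕ} {M : S × ℕ → Option ℕ} :
      M (q, i) = some j →
      MemoAtRun A0 w A q i M M (.failure j) [.memo q i, .fail j]
  | accept {A : SubNFA Sigma S} {q : S} {i : ℕ} {M : S × ℕ → Option ℕ} :
      M (q, i) = none → q ∈ A.F →
      MemoAtRun A0 w A q i M M (.successAt i {(q, i)}) [.call q i, .succ i]
  | eps {A : SubNFA Sigma S} {q q' : S} {i : ℕ} {M M' : S × ℕ → Option ℕ}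
      {r : AtResult S} {s : List (AtRunElem S)} :
      M (q, i) = none → q ∉ A.F → A.T q = SubTrans.eps q' →
      MemoAtRun A0 w A q' i M M' r s →
      MemoAtRun A0 w A q i M (atRecord M' q i r) (atFinal q i r)
        (.call q i :: s ++ [r.elem])
  | branchNoBT {A : SubNFA Sigma S} {q q' q'' : S} {i : ℕ} {M M' : S × ℕ → Option ℕ}
      {r : AtResult S} {s : List (AtRunElem S)} :
      M (q, i) = none → q ∉ A.F → A.T q = SubTrans.branch q' q'' →
      MemoAtRun A0 w A q' i M M' r s →
      (∀ j, r = AtResult.failure j → j ≠ A0.nu q) →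
      MemoAtRun A0 w A q i M (atRecord M' q i r) (atFinal q i r)
        (.call q i :: s ++ [r.elem])
  | branchBTSucc {A : SubNFA Sigma S} {q q' q'' : S} {i i'' : ℕ} {K : Finset (S × ℕ)}
      {M M1 M2 : S × ℕ → Option ℕ} {s1 s2 : List (AtRunElem S)} :
      M (q, i) = none → q ∉ A.F → A.T q = SubTrans.branch q' q'' →
      MemoAtRun A0 w A q' i M M1 (.failure (A0.nu q)) s1 →
      MemoAtRun A0 w A q'' i M1 M2 (.successAt i'' K) s2 →
      MemoAtRun A0 w A q i M M2 (atFinal q i (.successAt i'' K))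
        (.call q i :: s1 ++ s2 ++ [AtRunElem.succ i''])
  | branchBTFail {A : SubNFA Sigma S} {q q' q'' : S} {i j' : ℕ}
      {M M1 M2 : S × ℕ → Option ℕ} {s1 s2 : List (AtRunElem S)} :
      M (q, i) = none → q ∉ A.F → A.T q = SubTrans.branch q' q'' →
      MemoAtRun A0 w A q' i M M1 (.failure (A0.nu q)) s1 →
      MemoAtRun A0 w A q'' i M1 M2 (.failure j') s2 →
      MemoAtRun A0 w A q i M (atRecord M2 q i (.failure (min (A0.nu q) j')))
        (.failure (min (A0.nu q) j'))
        (.call q i :: s1 ++ s2 ++ [AtRunElem.fail (min (A0.nu q) j')])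
  | charSucc {A : SubNFA Sigma S} {q q' : S} {σ : Sigma} {i : ℕ}
      {M M' : S × ℕ → Option ℕ} {r : AtResult S} {s : List (AtRunElem S)} :
      M (q, i) = none → q ∉ A.F → A.T q = SubTrans.char σ q' →
      w[i]? = some σ →
      MemoAtRun A0 w A q' (i + 1) M M' r s →
      MemoAtRun A0 w A q i M (atRecord M' q i r) (atFinal q i r)
        (.call q i :: s ++ [r.elem])
  | charFail {A : SubNFA Sigma S} {q q' : S} {σ : Sigma} {i : ℕ}
      {M : S × ℕ → Option ℕ} :
      M (q, i) = none → q ∉ A.F → A.T q = SubTrans.char σ q' →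
      w[i]? ≠ some σ →
      MemoAtRun A0 w A q i M (atRecord M q i (.failure (A0.nu q)))
        (.failure (A0.nu q)) [.call q i, .fail (A0.nu q)]
  | subSuccSucc {A A' : SubNFA Sigma S} {q q' : S} {i i' i'' : ℕ}
      {K' K'' : Finset (S × ℕ)} {M M1 M2 : S × ℕ → Option ℕ}
      {s1 s2 : List (AtRunElem S)} :
      M (q, i) = none → q ∉ A.F → A.T q = SubTrans.sub Kind.at A' q' →
      MemoAtRun A0 w A' A'.q0 i M M1 (.successAt i' K') s1 →
      MemoAtRun A0 w A q' i' M1 M2 (.successAt i'' K'') s2 →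
      MemoAtRun A0 w A q i M M2 (atFinal q i (.successAt i'' (K' ∪ K'')))
        (.call q i :: s1 ++ s2 ++ [AtRunElem.succ i''])
  | subSuccFail {A A' : SubNFA Sigma S} {q q' : S} {i i' j : ℕ} {K' : Finset (S × ℕ)}
      {M M1 M2 : S × ℕ → Option ℕ} {s1 s2 : List (AtRunElem S)} :
      M (q, i) = none → q ∉ A.F → A.T q = SubTrans.sub Kind.at A' q' →
      MemoAtRun A0 w A' A'.q0 i M M1 (.successAt i' K') s1 →
      MemoAtRun A0 w A q' i' M1 M2 (.failure j) s2 →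
      MemoAtRun A0 w A q i M (atRecord (atBatch M2 K' j) q i (.failure j)) (.failure j)
        (.call q i :: s1 ++ s2 ++ [AtRunElem.fail j])
  | subFailHigh {A A' : SubNFA Sigma S} {q q' : S} {i j : ℕ}
      {M M1 : S × ℕ → Option ℕ} {s1 : List (AtRunElem S)} :
      M (q, i) = none → q ∉ A.F → A.T q = SubTrans.sub Kind.at A' q' →
      MemoAtRun A0 w A' A'.q0 i M M1 (.failure j) s1 →
      A0.nu q < j →
      MemoAtRun A0 w A q i M (atRecord M1 q i (.failure (A0.nu q)))
        (.failure (A0.nu q)) (.call q i :: s1 ++ [AtRunElem.fail (A0.nu q)])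
  | subFailLow {A A' : SubNFA Sigma S} {q q' : S} {i j : ℕ}
      {M M1 : S × ℕ → Option ℕ} {s1 : List (AtRunElem S)} :
      M (q, i) = none → q ∉ A.F → A.T q = SubTrans.sub Kind.at A' q' →
      MemoAtRun A0 w A' A'.q0 i M M1 (.failure j) s1 →
      j ≤ A0.nu q →
      MemoAtRun A0 w A q i M (atRecord M1 q i (.failure j)) (.failure j)
        (.call q i :: s1 ++ [AtRunElem.fail j])

/-! ## The combined algorithm `Memo-(la,at)` -/

/-- Values of the memoization table of `Memo-(la,at)`: `Success` or `Failure(j)`. -/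
inductive LaAtVal : Type where
  | success : LaAtVal
  | failure : ℕ → LaAtVal

/-- Results of `Memo-(la,at)`: `SuccessAt(i', K)`, bare `Success`, or `Failure(j)`. -/
inductive LaAtResult (S : Type) : Type where
  | successAt : ℕ → Finset (S × ℕ) → LaAtResult S
  | success : LaAtResult S
  | failure : ℕ → LaAtResult S

def LaAtVal.toResult {S : Type} : LaAtVal → LaAtResult S
  | .success => .success
  | .failure j => .failure j

/-- `f`, converting results of `Memo-(la,at)` to results of `Match-(la,at)`
(undefined on the bare value `Success`). -/
def LaAtResult.toResult? {S : Type} : LaAtResult S → Option Result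
  | .successAt i _ => some (.successAt i)
  | .success => none
  | .failure _ => some .failure

def laAtFinal [DecidableEq S] (q : S) (i : ℕ) : LaAtResult S → LaAtResult S
  | .successAt i' K => .successAt i' (insert (q, i) K)
  | r => r

def laAtRecord [DecidableEq S] (M : S × ℕ → Option LaAtVal) (q : S) (i : ℕ) :
    LaAtResult S → (S × ℕ → Option LaAtVal)
  | .successAt _ _ => M
  | .success => fun p => if p = (q, i) then some LaAtVal.success else M p
  | .failure j => fun p => if p = (q, i) then some (LaAtVal.failure j) else M p

def laAtBatch [DecidableEq S] (M : S × ℕ → Option LaAtVal) (K : Finset (S × ℕ))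
    (v : LaAtVal) : S × ℕ → Option LaAtVal :=
  fun p => if p ∈ K then some v else M p

/-- Big-step semantics (with resulting memoization table and the number of recursive
calls made) of the combined memoized backtracking matching algorithm `Memo-(la,at)`:
`MemoLaAtRun w A0 A q i M M' r n` means the call `Memo-(la,at)^M_{A0,A,w}(q, i)`
terminates with result `r`, final memoization table `M'`, making `n` calls in total.
On a positive look-ahead transition, the sub-automaton becomes the new whole automaton
(so nesting depths of atomic grouping are reset by look-around operators). -/
inductive MemoLaAtRun [DecidableEq S] (w : List Sigma) :
    SubNFA Sigma S → SubNFA Sigma S → S → ℕ →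
    (S × ℕ → Option LaAtVal) → (S × ℕ → Option LaAtVal) → LaAtResult S → ℕ → Prop where
  | memoHit {A0 A : SubNFA Sigma S} {q : S} {i : ℕ} {M : S × ℕ → Option LaAtVal}
      {v : LaAtVal} :
      M (q, i) = some v →
      MemoLaAtRun w A0 A q i M M v.toResult 1
  | accept {A0 A : SubNFA Sigma S} {q : S} {i : ℕ} {M : S × ℕ → Option LaAtVal} :
      M (q, i) = none → q ∈ A.F →
      MemoLaAtRun w A0 A q i M M (.successAt i {(q, i)}) 1
  | eps {A0 A : SubNFA Sigma S} {q q' : S} {i : ℕ} {M M' : S × ℕ → Option LaAtVal}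
      {r : LaAtResult S} {n : ℕ} :
      M (q, i) = none → q ∉ A.F → A.T q = SubTrans.eps q' →
      MemoLaAtRun w A0 A q' i M M' r n →
      MemoLaAtRun w A0 A q i M (laAtRecord M' q i (laAtFinal q i r)) (laAtFinal q i r)
        (n + 1)
  | branchNoBT {A0 A : SubNFA Sigma S} {q q' q'' : S} {i : ℕ}
      {M M' : S × ℕ → Option LaAtVal} {r : LaAtResult S} {n : ℕ} :
      M (q, i) = none → q ∉ A.F → A.T q = SubTrans.branch q' q'' →
      MemoLaAtRun w A0 A q' i M M' r n →
      (∀ j, r = LaAtResult.failure j → j ≠ A0.nu q) →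
      MemoLaAtRun w A0 A q i M (laAtRecord M' q i (laAtFinal q i r)) (laAtFinal q i r)
        (n + 1)
  | branchBTFail {A0 A : SubNFA Sigma S} {q q' q'' : S} {i j' : ℕ}
      {M M1 M2 : S × ℕ → Option LaAtVal} {n1 n2 : ℕ} :
      M (q, i) = none → q ∉ A.F → A.T q = SubTrans.branch q' q'' →
      MemoLaAtRun w A0 A q' i M M1 (.failure (A0.nu q)) n1 →
      MemoLaAtRun w A0 A q'' i M1 M2 (.failure j') n2 →
      MemoLaAtRun w A0 A q i M
        (laAtRecord M2 q i (.failure (min (A0.nu q) j')))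
        (.failure (min (A0.nu q) j')) (n1 + n2 + 1)
  | branchBTOther {A0 A : SubNFA Sigma S} {q q' q'' : S} {i : ℕ}
      {M M1 M2 : S × ℕ → Option LaAtVal} {r : LaAtResult S} {n1 n2 : ℕ} :
      M (q, i) = none → q ∉ A.F → A.T q = SubTrans.branch q' q'' →
      MemoLaAtRun w A0 A q' i M M1 (.failure (A0.nu q)) n1 →
      MemoLaAtRun w A0 A q'' i M1 M2 r n2 →
      (∀ j, r ≠ LaAtResult.failure j) →
      MemoLaAtRun w A0 A q i M (laAtRecord M2 q i (laAtFinal q i r)) (laAtFinal q i r)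
        (n1 + n2 + 1)
  | charSucc {A0 A : SubNFA Sigma S} {q q' : S} {σ : Sigma} {i : ℕ}
      {M M' : S × ℕ → Option LaAtVal} {r : LaAtResult S} {n : ℕ} :
      M (q, i) = none → q ∉ A.F → A.T q = SubTrans.char σ q' →
      w[i]? = some σ →
      MemoLaAtRun w A0 A q' (i + 1) M M' r n →
      MemoLaAtRun w A0 A q i M (laAtRecord M' q i (laAtFinal q i r)) (laAtFinal q i r)
        (n + 1)
  | charFail {A0 A : SubNFA Sigma S} {q q' : S} {σ : Sigma} {i : ℕ}
      {M : S × ℕ → Option LaAtVal} :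
      M (q, i) = none → q ∉ A.F → A.T q = SubTrans.char σ q' →
      w[i]? ≠ some σ →
      MemoLaAtRun w A0 A q i M (laAtRecord M q i (.failure (A0.nu q)))
        (.failure (A0.nu q)) 1
  | plaSuccAt {A0 A A' : SubNFA Sigma S} {q q' : S} {i i' : ℕ} {K' : Finset (S × ℕ)}
      {M M1 M2 : S × ℕ → Option LaAtVal} {r : LaAtResult S} {n1 n2 : ℕ} :
      M (q, i) = none → q ∉ A.F → A.T q = SubTrans.sub Kind.pla A' q' →
      MemoLaAtRun w A' A' A'.q0 i M M1 (.successAt i' K') n1 →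
      MemoLaAtRun w A0 A q' i (laAtBatch M1 K' LaAtVal.success) M2 r n2 →
      MemoLaAtRun w A0 A q i M (laAtRecord M2 q i (laAtFinal q i r)) (laAtFinal q i r)
        (n1 + n2 + 1)
  | plaBare {A0 A A' : SubNFA Sigma S} {q q' : S} {i : ℕ}
      {M M1 M2 : S × ℕ → Option LaAtVal} {r : LaAtResult S} {n1 n2 : ℕ} :
      M (q, i) = none → q ∉ A.F → A.T q = SubTrans.sub Kind.pla A' q' →
      MemoLaAtRun w A' A' A'.q0 i M M1 .success n1 →
      MemoLaAtRun w A0 A q' i M1 M2 r n2 →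
      MemoLaAtRun w A0 A q i M (laAtRecord M2 q i (laAtFinal q i r)) (laAtFinal q i r)
        (n1 + n2 + 1)
  | plaFail {A0 A A' : SubNFA Sigma S} {q q' : S} {i j : ℕ}
      {M M1 : S × ℕ → Option LaAtVal} {n1 : ℕ} :
      M (q, i) = none → q ∉ A.F → A.T q = SubTrans.sub Kind.pla A' q' →
      MemoLaAtRun w A' A' A'.q0 i M M1 (.failure j) n1 →
      MemoLaAtRun w A0 A q i M (laAtRecord M1 q i (.failure (A0.nu q)))
        (.failure (A0.nu q)) (n1 + 1)
  | atSuccSucc {A0 A A' : SubNFA Sigma S} {q q' : S} {i i' i'' : ℕ}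
      {K' K'' : Finset (S × ℕ)} {M M1 M2 : S × ℕ → Option LaAtVal} {n1 n2 : ℕ} :
      M (q, i) = none → q ∉ A.F → A.T q = SubTrans.sub Kind.at A' q' →
      MemoLaAtRun w A0 A' A'.q0 i M M1 (.successAt i' K') n1 →
      MemoLaAtRun w A0 A q' i' M1 M2 (.successAt i'' K'') n2 →
      MemoLaAtRun w A0 A q i M M2
        (laAtFinal q i (.successAt i'' (K' ∪ K''))) (n1 + n2 + 1)
  | atSuccBare {A0 A A' : SubNFA Sigma S} {q q' : S} {i i' : ℕ} {K' : Finset (S × ℕ)}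
      {M M1 M2 : S × ℕ → Option LaAtVal} {n1 n2 : ℕ} :
      M (q, i) = none → q ∉ A.F → A.T q = SubTrans.sub Kind.at A' q' →
      MemoLaAtRun w A0 A' A'.q0 i M M1 (.successAt i' K') n1 →
      MemoLaAtRun w A0 A q' i' M1 M2 .success n2 →
      MemoLaAtRun w A0 A q i M
        (laAtRecord (laAtBatch M2 K' LaAtVal.success) q i .success) .success
        (n1 + n2 + 1)
  | atSuccFail {A0 A A' : SubNFA Sigma S} {q q' : S} {i i' j : ℕ} {K' : Finset (S × ℕ)}
      {M M1 M2 : S × ℕ → Option LaAtVal} {n1 n2 : ℕ} :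
      M (q, i) = none → q ∉ A.F → A.T q = SubTrans.sub Kind.at A' q' →
      MemoLaAtRun w A0 A' A'.q0 i M M1 (.successAt i' K') n1 →
      MemoLaAtRun w A0 A q' i' M1 M2 (.failure j) n2 →
      MemoLaAtRun w A0 A q i M
        (laAtRecord (laAtBatch M2 K' (LaAtVal.failure j)) q i (.failure j))
        (.failure j) (n1 + n2 + 1)
  | atBare {A0 A A' : SubNFA Sigma S} {q q' : S} {i : ℕ}
      {M M1 : S × ℕ → Option LaAtVal} {n1 : ℕ} :
      M (q, i) = none → q ∉ A.F → A.T q = SubTrans.sub Kind.at A' q' →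
      MemoLaAtRun w A0 A' A'.q0 i M M1 .success n1 →
      MemoLaAtRun w A0 A q i M (laAtRecord M1 q i .success) .success (n1 + 1)
  | atFailHigh {A0 A A' : SubNFA Sigma S} {q q' : S} {i j : ℕ}
      {M M1 : S × ℕ → Option LaAtVal} {n1 : ℕ} :
      M (q, i) = none → q ∉ A.F → A.T q = SubTrans.sub Kind.at A' q' →
      MemoLaAtRun w A0 A' A'.q0 i M M1 (.failure j) n1 →
      A0.nu q < j →
      MemoLaAtRun w A0 A q i M (laAtRecord M1 q i (.failure (A0.nu q)))
        (.failure (A0.nu q)) (n1 + 1)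
  | atFailLow {A0 A A' : SubNFA Sigma S} {q q' : S} {i j : ℕ}
      {M M1 : S × ℕ → Option LaAtVal} {n1 : ℕ} :
      M (q, i) = none → q ∉ A.F → A.T q = SubTrans.sub Kind.at A' q' →
      MemoLaAtRun w A0 A' A'.q0 i M M1 (.failure j) n1 →
      j ≤ A0.nu q →
      MemoLaAtRun w A0 A q i M (laAtRecord M1 q i (.failure j)) (.failure j) (n1 + 1)



/-!
`Match-(la,at)` is deterministic but forgets where a failure came from, while `Memo-at` reports
`Failure(j)` and thereby remembers it. Run the current automaton together with the stack of
continuations `(B, q')` left behind by the enclosing atomic groups: `Failure(j)` means that in this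
extended run the first failure happens in the automaton at nesting depth `j`. Since state sets are
disjoint, a state determines its stack, so an entry `M(q, i) = Failure(j)` has a meaning of its own.
If a call succeeds at `i'`, then each delayed key in `K` is a point from which the extended run
arrives at the enclosing continuations at position `i'`; hence it fails wherever they do, which
justifies the batch recording. Soundness of all results and table entries is then an induction on
`Memo-at` runs. Conversely a terminating `Match-(la,at)` run makes `Memo-at` terminate, because
soundness forces `Memo-at` to take the same choices unless it has already failed.
-/

/-- The stack of continuations of an automaton nested in atomic groups, innermost first: the pair
`(B, q')` stands for resuming the enclosing automaton `B` at `q'`. -/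
abbrev Context (Sigma S : Type) := List (SubNFA Sigma S × S)

section Components

variable {A A' B C : SubNFA Sigma S} {ctx ctx' : Context Sigma S} {p q q' q'' : S} {k : Kind}

/-- All states of the sub-automaton, if any, that labels a transition. -/
def SubTrans.states (t : SubTrans Sigma S) : List S :=
  (t.subCompsD.map Prod.fst).flatMap SubNFA.Q

@[simp]
theorem SubTrans.states_sub : (SubTrans.sub k A q').states = A.allStates := by
  simp [SubTrans.states, SubTrans.subCompsD, SubNFA.allStates, SubNFA.comps, Function.comp_def]

theorem SubNFA.compsD_eq (A : SubNFA Sigma S) :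
    A.compsD = (A, 0) :: A.Q.flatMap fun p => (A.T p).subCompsD := by
  cases A
  simp [SubNFA.compsD, SubNFA.Q, SubNFA.T]

theorem SubNFA.allStates_eq (A : SubNFA Sigma S) :
    A.allStates = A.Q ++ A.Q.flatMap fun p => (A.T p).states := by
  simp [SubNFA.allStates, SubNFA.comps, A.compsD_eq, SubTrans.states, List.map_flatMap,
    List.flatMap_assoc]

theorem SubNFA.mem_compsD_of_mem_sub {d : ℕ} (hp : p ∈ A.Q) (hT : A.T p = .sub .at A' q')
    (hB : (B, d) ∈ A'.compsD) : (B, d + 1) ∈ A.compsD := by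
  rw [A.compsD_eq]
  refine List.mem_cons_of_mem _ (List.mem_flatMap.2 ⟨p, hp, ?_⟩)
  simpa [hT, SubTrans.subCompsD] using hB

/-- `A.Occurs B ctx`: the automaton `B` is reached from `A` through nested atomic groups, with
continuations `ctx`. -/
inductive SubNFA.Occurs : SubNFA Sigma S → SubNFA Sigma S → Context Sigma S → Prop where
  | root {A : SubNFA Sigma S} : Occurs A A []
  | sub {A A' B : SubNFA Sigma S} {p q' : S} {ctx : Context Sigma S} :
      p ∈ A.Q → A.T p = .sub .at A' q' → Occurs A' B ctx → Occurs A B (ctx ++ [(A, q')])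

namespace SubNFA.Occurs

theorem step (hB : A.Occurs B ctx) (hq : q ∈ B.Q) (hT : B.T q = .sub .at A' q') :
    A.Occurs A' ((B, q') :: ctx) := by
  induction hB with
  | root => exact sub hq hT root
  | sub hp hTp _ ih => exact sub hp hTp (ih hq hT)

theorem mem_compsD (hB : A.Occurs B ctx) : (B, ctx.length) ∈ A.compsD := by
  induction hB with
  | root => simp [SubNFA.compsD_eq]
  | sub hp hT _ ih => simpa using SubNFA.mem_compsD_of_mem_sub hp hT ih

theorem mem_comps (hB : A.Occurs B ctx) : B ∈ A.comps :=
  List.mem_map_of_mem hB.mem_compsD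

theorem mem_allStates (hB : A.Occurs B ctx) (hq : q ∈ B.Q) : q ∈ A.allStates :=
  List.mem_flatMap_of_mem hB.mem_comps hq

theorem mem_states_of_sub (hB : A'.Occurs B ctx) (hq : q ∈ B.Q) (hT : A.T p = .sub .at A' q') :
    q ∈ (A.T p).states := by
  simpa [hT] using hB.mem_allStates hq

theorem unique (hA : A.allStates.Nodup) (hB : A.Occurs B ctx) (hC : A.Occurs C ctx')
    (hqB : q ∈ B.Q) (hqC : q ∈ C.Q) : B = C ∧ ctx = ctx' := by
  induction hB generalizing C ctx' with
  | @root A =>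
    cases hC with
    | root => exact ⟨rfl, rfl⟩
    | sub hp hT hC =>
      rw [A.allStates_eq] at hA
      exact absurd (List.mem_flatMap_of_mem hp (hC.mem_states_of_sub hqC hT))
        (hA.disjoint hqB)
  | @sub A A₁ B p q₁ ctx hp hT hB ih =>
    rw [A.allStates_eq] at hA
    cases hC with
    | root =>
      exact absurd (List.mem_flatMap_of_mem hp (hB.mem_states_of_sub hqB hT))
        (hA.disjoint hqC)
    | @sub _ A₂ _ p' q₂ ctx' hp' hT' hC =>
      obtain ⟨hNodup, hDisj⟩ := List.nodup_flatMap.1 hA.of_append_right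
      have : Std.Symm (Function.onFun List.Disjoint fun p => (A.T p).states) :=
        ⟨fun _ _ h => h.symm⟩
      have hpp' : p = p' := by
        by_contra hne
        exact hDisj.forall hp hp' hne (hB.mem_states_of_sub hqB hT) (hC.mem_states_of_sub hqC hT')
      subst hpp'
      obtain ⟨-, rfl, rfl⟩ : Kind.at = Kind.at ∧ A₁ = A₂ ∧ q₁ = q₂ := by simpa [hT] using hT'
      obtain ⟨rfl, rfl⟩ := ih (by simpa [hT] using hNodup p hp) hC hqB hqC
      exact ⟨rfl, rfl⟩

end SubNFA.Occurs

theorem sum_map_ite_mem_eq_of_nodup_flatMap {ι β N : Type*} [AddMonoid N] [DecidableEq β]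
    {l : List ι} {g : ι → List β} (f : ι → N) {a : ι} {b : β} (hl : (l.flatMap g).Nodup)
    (ha : a ∈ l) (hb : b ∈ g a) : (l.map fun x => if b ∈ g x then f x else 0).sum = f a := by
  obtain ⟨l₁, l₂, rfl⟩ := List.append_of_mem ha
  simp only [List.flatMap_append, List.flatMap_cons, List.nodup_append', List.disjoint_append_right]
    at hl
  have sum_eq_zero {l' : List ι} (h : List.Disjoint (g a) (l'.flatMap g)) :
      (l'.map fun x => if b ∈ g x then f x else 0).sum = 0 :=
    List.sum_eq_zero (by
      rintro _ hmem
      obtain ⟨x, hx, rfl⟩ := List.mem_map.1 hmem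
      exact if_neg fun hbx => h hb (List.mem_flatMap_of_mem hx hbx))
  simp [hb, sum_eq_zero hl.2.2.1.symm, sum_eq_zero hl.2.1.2.2]

/-- `A.Located B ctx q`: the state `q` of `A` is a top-level state of the automaton `B`, which
occurs in `A` with continuations `ctx`. -/
structure SubNFA.Located (A B : SubNFA Sigma S) (ctx : Context Sigma S) (q : S) : Prop where
  occurs : A.Occurs B ctx
  mem : q ∈ B.Q

namespace SubNFA.Located

theorem unique (hWF : A.WF) (hB : A.Located B ctx q) (hC : A.Located C ctx' q) :
    B = C ∧ ctx = ctx' :=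
  hB.occurs.unique hWF.2 hC.occurs hB.mem hC.mem

theorem nu_eq [DecidableEq S] (hWF : A.WF) (hB : A.Located B ctx q) : A.nu q = ctx.length :=
  sum_map_ite_mem_eq_of_nodup_flatMap Prod.snd
    (by simpa [SubNFA.allStates, SubNFA.comps, List.flatMap_map] using hWF.2)
    hB.occurs.mem_compsD hB.mem

theorem q0 (hWF : A.WF) (hB : A.Occurs B ctx) : A.Located B ctx B.q0 :=
  ⟨hB, (hWF.1 _ hB.mem_comps).1⟩

theorem eps (hWF : A.WF) (hq : A.Located B ctx q) (hF : q ∉ B.F) (hT : B.T q = .eps q') :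
    A.Located B ctx q' :=
  ⟨hq.occurs, by simpa [hT] using (hWF.1 _ hq.occurs.mem_comps).2.2 q hq.mem hF⟩

theorem branch_left (hWF : A.WF) (hq : A.Located B ctx q) (hF : q ∉ B.F)
    (hT : B.T q = .branch q' q'') : A.Located B ctx q' := by
  have hmem : q' ∈ B.Q ∧ q'' ∈ B.Q := by
    simpa [hT] using (hWF.1 _ hq.occurs.mem_comps).2.2 q hq.mem hF
  exact ⟨hq.occurs, hmem.1⟩

theorem branch_right (hWF : A.WF) (hq : A.Located B ctx q) (hF : q ∉ B.F)
    (hT : B.T q = .branch q' q'') : A.Located B ctx q'' := by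
  have hmem : q' ∈ B.Q ∧ q'' ∈ B.Q := by
    simpa [hT] using (hWF.1 _ hq.occurs.mem_comps).2.2 q hq.mem hF
  exact ⟨hq.occurs, hmem.2⟩

theorem char {σ : Sigma} (hWF : A.WF) (hq : A.Located B ctx q) (hF : q ∉ B.F)
    (hT : B.T q = .char σ q') : A.Located B ctx q' :=
  ⟨hq.occurs, by simpa [hT] using (hWF.1 _ hq.occurs.mem_comps).2.2 q hq.mem hF⟩

theorem sub (hWF : A.WF) (hq : A.Located B ctx q) (hF : q ∉ B.F) (hT : B.T q = .sub k A' q') :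
    A.Located B ctx q' :=
  ⟨hq.occurs, by simpa [hT] using (hWF.1 _ hq.occurs.mem_comps).2.2 q hq.mem hF⟩

theorem sub_q0 (hWF : A.WF) (hq : A.Located B ctx q) (hT : B.T q = .sub .at A' q') :
    A.Located A' ((B, q') :: ctx) A'.q0 :=
  q0 hWF (hq.occurs.step hq.mem hT)

theorem kind_eq_at [DecidableEq S] (hAt : A.IsAtNFA) (hq : A.Located B ctx q) (hF : q ∉ B.F)
    (hT : B.T q = .sub k A' q') : k = .at :=
  hAt k (List.mem_flatMap_of_mem hq.occurs.mem_comps (List.mem_filterMap.2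
    ⟨q, List.mem_filter.2 ⟨hq.mem, decide_eq_true hF⟩, by simp [hT]⟩))

end SubNFA.Located

end Components

theorem LAMatchRun.deterministic {w : List Sigma} {A : SubNFA Sigma S} {q : S} {i : ℕ}
    {r r' : Result} {s s' : List (LaRunElem S)} (h : LAMatchRun w A q i r s)
    (h' : LAMatchRun w A q i r' s') : r = r' := by
  induction h generalizing r' s' <;> cases h' <;> grind

/-- `Match-(la,at)` terminates on `(q, i)` with result `r`. -/
def Matches (w : List Sigma) (A : SubNFA Sigma S) (q : S) (i : ℕ) (r : Result) : Prop :=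
  ∃ s, LAMatchRun w A q i r s

namespace Matches

variable {w : List Sigma} {A A' : SubNFA Sigma S} {q q' q'' : S} {σ : Sigma} {i i' : ℕ}
  {r r' : Result}

theorem deterministic : Matches w A q i r → Matches w A q i r' → r = r'
  | ⟨_, h⟩, ⟨_, h'⟩ => h.deterministic h'

theorem accept (hF : q ∈ A.F) : Matches w A q i (.successAt i) :=
  ⟨_, .accept hF⟩

theorem eps (hF : q ∉ A.F) (hT : A.T q = .eps q') : Matches w A q' i r → Matches w A q i r
  | ⟨_, h⟩ => ⟨_, .eps hF hT h⟩

theorem branchSucc (hF : q ∉ A.F) (hT : A.T q = .branch q' q'') :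
    Matches w A q' i (.successAt i') → Matches w A q i (.successAt i')
  | ⟨_, h⟩ => ⟨_, .branchSucc hF hT h⟩

theorem branchFail (hF : q ∉ A.F) (hT : A.T q = .branch q' q'') :
    Matches w A q' i .failure → Matches w A q'' i r → Matches w A q i r
  | ⟨_, h⟩, ⟨_, h'⟩ => ⟨_, .branchFail hF hT h h'⟩

theorem charSucc (hF : q ∉ A.F) (hT : A.T q = .char σ q') (hw : w[i]? = some σ) :
    Matches w A q' (i + 1) r → Matches w A q i r
  | ⟨_, h⟩ => ⟨_, .charSucc hF hT hw h⟩

theorem charFail (hF : q ∉ A.F) (hT : A.T q = .char σ q') (hw : w[i]? ≠ some σ) :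
    Matches w A q i .failure :=
  ⟨_, .charFail hF hT hw⟩

theorem atSucc (hF : q ∉ A.F) (hT : A.T q = .sub .at A' q') :
    Matches w A' A'.q0 i (.successAt i') → Matches w A q' i' r → Matches w A q i r
  | ⟨_, h⟩, ⟨_, h'⟩ => ⟨_, .atSucc hF hT h h'⟩

theorem atFail (hF : q ∉ A.F) (hT : A.T q = .sub .at A' q') :
    Matches w A' A'.q0 i .failure → Matches w A q i .failure
  | ⟨_, h⟩ => ⟨_, .atFail hF hT h⟩

end Matches

/-- Resuming the stack `ctx` at position `i` fails in the automaton at nesting depth `j`, all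
automata above it on the stack having succeeded. A single automaton `B` started at `q` inside `ctx`
is the stack `(B, q) :: ctx`. -/
inductive FailsAt (w : List Sigma) : Context Sigma S → ℕ → ℕ → Prop where
  | here {B : SubNFA Sigma S} {q : S} {ctx : Context Sigma S} {i : ℕ} :
      Matches w B q i .failure → FailsAt w ((B, q) :: ctx) i ctx.length
  | later {B : SubNFA Sigma S} {q : S} {ctx : Context Sigma S} {i i' j : ℕ} :
      Matches w B q i (.successAt i') → FailsAt w ctx i' j → FailsAt w ((B, q) :: ctx) i j

namespace FailsAt

variable {w : List Sigma} {A B : SubNFA Sigma S} {ctx : Context Sigma S} {p q q' q'' : S}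
  {i i' j : ℕ}

theorem lt_length (h : FailsAt w ctx i j) : j < ctx.length := by
  induction h with
  | here => simp
  | later _ _ ih => exact ih.trans (by simp)

theorem le_length (h : FailsAt w ((B, q) :: ctx) i j) : j ≤ ctx.length :=
  Nat.lt_succ_iff.1 h.lt_length

theorem matches_failure (h : FailsAt w ((B, q) :: ctx) i j) (hj : ctx.length ≤ j) :
    Matches w B q i .failure := by
  cases h with
  | here h => exact h
  | later _ h => exact absurd h.lt_length hj.not_gt

theorem of_matches (hpq : ∀ r, Matches w B p i' r → Matches w B q i r)
    (h : FailsAt w ((B, p) :: ctx) i' j) : FailsAt w ((B, q) :: ctx) i j := by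
  cases h with
  | here h => exact .here (hpq _ h)
  | later h h' => exact .later (hpq _ h) h'

theorem branch_left (hF : q ∉ B.F) (hT : B.T q = .branch q' q'')
    (h : FailsAt w ((B, q') :: ctx) i j) (hj : j ≠ ctx.length) :
    FailsAt w ((B, q) :: ctx) i j := by
  cases h with
  | here => exact absurd rfl hj
  | later h h' => exact .later (.branchSucc hF hT h) h'

theorem sub (hF : q ∉ B.F) (hT : B.T q = .sub .at A q')
    (h : FailsAt w ((A, A.q0) :: (B, q') :: ctx) i j) :
    FailsAt w ((B, q) :: ctx) i (min ctx.length j) := by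
  cases h with
  | here h => simpa using FailsAt.here (.atFail hF hT h)
  | later h h' =>
    rw [min_eq_right h'.le_length]
    exact h'.of_matches fun _ => .atSucc hF hT h

end FailsAt

/-- The meaning of a table entry `M(k) = Failure(j)`. It refers to the key alone, since a state
determines the automaton and the stack in which it is located. -/
def KeyFails (A : SubNFA Sigma S) (w : List Sigma) (k : S × ℕ) (j : ℕ) : Prop :=
  ∀ B ctx, A.Located B ctx k.1 → FailsAt w ((B, k.1) :: ctx) k.2 j

theorem FailsAt.keyFails {A B : SubNFA Sigma S} {w : List Sigma} {ctx : Context Sigma S} {q : S}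
    {i j : ℕ} (hWF : A.WF) (hq : A.Located B ctx q) (h : FailsAt w ((B, q) :: ctx) i j) :
    KeyFails A w (q, i) j := by
  intro C ctx' hC
  obtain ⟨rfl, rfl⟩ := hq.unique hWF hC
  exact h

/-- All entries of a memoization table are correct. -/
def TableSound (A : SubNFA Sigma S) (w : List Sigma) (M : S × ℕ → Option ℕ) : Prop :=
  ∀ k j, M k = some j → KeyFails A w k j

/-- Delayed keys may be recorded as `Failure(j)` once resuming `ctx` at position `i` is known to
fail at depth `j`. -/
def DelayedSound (A : SubNFA Sigma S) (w : List Sigma) (ctx : Context Sigma S) (i : ℕ)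
    (K : Finset (S × ℕ)) : Prop :=
  ∀ k ∈ K, ∀ j, FailsAt w ctx i j → KeyFails A w k j

/-- Correctness of the result of the `Memo-at` call on `(q, i)` in the automaton `B` with enclosing
continuations `ctx`. -/
def ResultSound (A : SubNFA Sigma S) (w : List Sigma) (B : SubNFA Sigma S) (ctx : Context Sigma S)
    (q : S) (i : ℕ) : AtResult S → Prop
  | .successAt i' K => Matches w B q i (.successAt i') ∧ DelayedSound A w ctx i' K
  | .failure j => FailsAt w ((B, q) :: ctx) i j

/-- Correctness of the table and the result with which a `Memo-at` call returns. -/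
structure CallSound (A : SubNFA Sigma S) (w : List Sigma) (B : SubNFA Sigma S)
    (ctx : Context Sigma S) (q : S) (i : ℕ) (M : S × ℕ → Option ℕ) (r : AtResult S) : Prop where
  table : TableSound A w M
  result : ResultSound A w B ctx q i r

theorem TableSound.empty (A : SubNFA Sigma S) (w : List Sigma) :
    TableSound A w fun _ => none := by
  simp [TableSound]

theorem ResultSound.matches_toResult {A B : SubNFA Sigma S} {w : List Sigma} {q : S} {i : ℕ}
    {r : AtResult S} (h : ResultSound A w B [] q i r) : Matches w B q i r.toResult := by
  cases r with
  | successAt => exact h.1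
  | failure j => exact FailsAt.matches_failure h (Nat.zero_le j)

theorem DelayedSound.resume {A B : SubNFA Sigma S} {w : List Sigma} {ctx : Context Sigma S}
    {q : S} {i i' : ℕ} {K : Finset (S × ℕ)} (hm : Matches w B q i (.successAt i'))
    (hK : DelayedSound A w ((B, q) :: ctx) i K) : DelayedSound A w ctx i' K :=
  fun k hk j hj => hK k hk j (.later hm hj)

theorem CallSound.accept {A B : SubNFA Sigma S} {w : List Sigma} {ctx : Context Sigma S}
    {q : S} {i : ℕ} {M : S × ℕ → Option ℕ} (hWF : A.WF) (hq : A.Located B ctx q)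
    (hM : TableSound A w M) (hF : q ∈ B.F) :
    CallSound A w B ctx q i M (.successAt i {(q, i)}) := by
  refine ⟨hM, .accept hF, fun k hk j hj => ?_⟩
  obtain rfl := Finset.mem_singleton.1 hk
  exact FailsAt.keyFails hWF hq (.later (.accept hF) hj)

section Soundness

variable [DecidableEq S] {A A' B : SubNFA Sigma S} {ctx : Context Sigma S} {w : List Sigma}
  {p q q' q'' : S} {i i' i'' j : ℕ} {M M₁ : S × ℕ → Option ℕ} {K K' : Finset (S × ℕ)}
  {r : AtResult S}

theorem TableSound.record_failure (hM : TableSound A w M) (hk : KeyFails A w (q, i) j) :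
    TableSound A w (atRecord M q i (.failure j)) := by
  intro k j' hj'
  simp only [atRecord] at hj'
  split_ifs at hj' with hkey
  · obtain rfl := Option.some.inj hj'
    exact hkey ▸ hk
  · exact hM k j' hj'

theorem TableSound.batch (hM : TableSound A w M) (hK : DelayedSound A w ctx i K)
    (h : FailsAt w ctx i j) : TableSound A w (atBatch M K j) := by
  intro k j' hj'
  simp only [atBatch] at hj'
  split_ifs at hj' with hk
  · obtain rfl := Option.some.inj hj'
    exact hK k hk j h
  · exact hM k j' hj'

theorem DelayedSound.insert (hWF : A.WF) (hq : A.Located B ctx q)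
    (hm : Matches w B q i (.successAt i')) (hK : DelayedSound A w ctx i' K) :
    DelayedSound A w ctx i' (insert (q, i) K) := by
  intro k hk j hj
  rcases Finset.mem_insert.1 hk with rfl | hk
  · exact FailsAt.keyFails hWF hq (.later hm hj)
  · exact hK k hk j hj

theorem DelayedSound.union (hK : DelayedSound A w ctx i K) (hK' : DelayedSound A w ctx i K') :
    DelayedSound A w ctx i (K ∪ K') :=
  fun k hk => (Finset.mem_union.1 hk).elim (hK k) (hK' k)

namespace CallSound

theorem success (hWF : A.WF) (hq : A.Located B ctx q) (hM : TableSound A w M)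
    (hm : Matches w B q i (.successAt i')) (hK : DelayedSound A w ctx i' K) :
    CallSound A w B ctx q i M (atFinal q i (.successAt i' K)) :=
  ⟨hM, hm, hK.insert hWF hq hm⟩

theorem failure (hWF : A.WF) (hq : A.Located B ctx q) (hM : TableSound A w M)
    (hf : FailsAt w ((B, q) :: ctx) i j) :
    CallSound A w B ctx q i (atRecord M q i (.failure j)) (.failure j) :=
  ⟨hM.record_failure (hf.keyFails hWF hq), hf⟩

theorem of_matches (hWF : A.WF) (hq : A.Located B ctx q)
    (hpq : ∀ r, Matches w B p i' r → Matches w B q i r) (h : CallSound A w B ctx p i' M r) :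
    CallSound A w B ctx q i (atRecord M q i r) (atFinal q i r) := by
  cases r with
  | successAt => exact success hWF hq h.table (hpq _ h.result.1) h.result.2
  | failure => exact failure hWF hq h.table (h.result.of_matches hpq)

theorem branch_left (hWF : A.WF) (hq : A.Located B ctx q) (hF : q ∉ B.F)
    (hT : B.T q = .branch q' q'') (h : CallSound A w B ctx q' i M r)
    (hr : ∀ j, r = .failure j → j ≠ ctx.length) :
    CallSound A w B ctx q i (atRecord M q i r) (atFinal q i r) := by
  cases r with
  | successAt => exact success hWF hq h.table (.branchSucc hF hT h.result.1) h.result.2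
  | failure j => exact failure hWF hq h.table (h.result.branch_left hF hT (hr j rfl))

theorem branch_right (hWF : A.WF) (hq : A.Located B ctx q) (hF : q ∉ B.F)
    (hT : B.T q = .branch q' q'') (h : CallSound A w B ctx q' i M₁ (.failure ctx.length))
    (h' : CallSound A w B ctx q'' i M r) :
    CallSound A w B ctx q i (atRecord M q i r) (atFinal q i r) :=
  h'.of_matches hWF hq fun _ => .branchFail hF hT (FailsAt.matches_failure h.result le_rfl)

theorem sub_success (hWF : A.WF) (hq : A.Located B ctx q) (hF : q ∉ B.F)
    (hT : B.T q = .sub .at A' q')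
    (h : CallSound A w A' ((B, q') :: ctx) A'.q0 i M₁ (.successAt i' K))
    (h' : CallSound A w B ctx q' i' M (.successAt i'' K')) :
    CallSound A w B ctx q i M (atFinal q i (.successAt i'' (K ∪ K'))) :=
  success hWF hq h'.table (.atSucc hF hT h.result.1 h'.result.1)
    ((h.result.2.resume h'.result.1).union h'.result.2)

theorem sub_resume_failure (hWF : A.WF) (hq : A.Located B ctx q) (hF : q ∉ B.F)
    (hT : B.T q = .sub .at A' q')
    (h : CallSound A w A' ((B, q') :: ctx) A'.q0 i M₁ (.successAt i' K))
    (h' : CallSound A w B ctx q' i' M (.failure j)) :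
    CallSound A w B ctx q i (atRecord (atBatch M K j) q i (.failure j)) (.failure j) :=
  failure hWF hq (h'.table.batch h.result.2 h'.result)
    (h'.result.of_matches fun _ => .atSucc hF hT h.result.1)

theorem sub_failure (hWF : A.WF) (hq : A.Located B ctx q) (hF : q ∉ B.F)
    (hT : B.T q = .sub .at A' q')
    (h : CallSound A w A' ((B, q') :: ctx) A'.q0 i M (.failure j)) :
    CallSound A w B ctx q i (atRecord M q i (.failure (min ctx.length j)))
      (.failure (min ctx.length j)) :=
  failure hWF hq h.table (h.result.sub hF hT)

end CallSound

theorem MemoAtRun.sound {s : List (AtRunElem S)} (hWF : A.WF) (h : MemoAtRun A w B q i M M₁ r s)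
    (hq : A.Located B ctx q) (hM : TableSound A w M) : CallSound A w B ctx q i M₁ r := by
  induction h generalizing ctx with
  | memoHit hMq => exact ⟨hM, hM _ _ hMq _ _ hq⟩
  | accept _ hF => exact .accept hWF hq hM hF
  | eps _ hF hT _ ih =>
    exact (ih (hq.eps hWF hF hT) hM).of_matches hWF hq fun _ => .eps hF hT
  | branchNoBT _ hF hT _ hr ih =>
    rw [hq.nu_eq hWF] at hr
    exact .branch_left hWF hq hF hT (ih (hq.branch_left hWF hF hT) hM) hr
  | branchBTSucc _ hF hT _ _ ih ih' =>
    rw [hq.nu_eq hWF] at ih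
    have h := ih (hq.branch_left hWF hF hT) hM
    exact .branch_right hWF hq hF hT h (ih' (hq.branch_right hWF hF hT) h.table)
  | branchBTFail _ hF hT _ _ ih ih' =>
    rw [hq.nu_eq hWF] at ih ⊢
    have h := ih (hq.branch_left hWF hF hT) hM
    have h' := ih' (hq.branch_right hWF hF hT) h.table
    rw [min_eq_right (FailsAt.le_length h'.result)]
    exact .branch_right hWF hq hF hT h h'
  | charSucc _ hF hT hw _ ih =>
    exact (ih (hq.char hWF hF hT) hM).of_matches hWF hq fun _ => .charSucc hF hT hw
  | charFail _ hF hT hw =>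
    rw [hq.nu_eq hWF]
    exact .failure hWF hq hM (.here (.charFail hF hT hw))
  | subSuccSucc _ hF hT _ _ ih ih' =>
    have h := ih (hq.sub_q0 hWF hT) hM
    exact .sub_success hWF hq hF hT h (ih' (hq.sub hWF hF hT) h.table)
  | subSuccFail _ hF hT _ _ ih ih' =>
    have h := ih (hq.sub_q0 hWF hT) hM
    exact .sub_resume_failure hWF hq hF hT h (ih' (hq.sub hWF hF hT) h.table)
  | subFailHigh _ hF hT _ hj ih =>
    rw [hq.nu_eq hWF] at hj ⊢
    simpa [min_eq_left hj.le] using CallSound.sub_failure hWF hq hF hT (ih (hq.sub_q0 hWF hT) hM)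
  | subFailLow _ hF hT _ hj ih =>
    rw [hq.nu_eq hWF] at hj
    simpa [min_eq_right hj] using CallSound.sub_failure hWF hq hF hT (ih (hq.sub_q0 hWF hT) hM)

end Soundness

section Termination

variable [DecidableEq S] {A A' B : SubNFA Sigma S} {ctx : Context Sigma S} {w : List Sigma}
  {q q' q'' : S} {i : ℕ} {M M₁ : S × ℕ → Option ℕ} {r : AtResult S} {s : List (AtRunElem S)}

/-- `Memo-at` terminates on `(q, i)` when started with the table `M`. -/
def MemoAtHalts (A : SubNFA Sigma S) (w : List Sigma) (B : SubNFA Sigma S) (q : S) (i : ℕ)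
    (M : S × ℕ → Option ℕ) : Prop :=
  ∃ M' r s, MemoAtRun A w B q i M M' r s

namespace MemoAtHalts

theorem of_miss (h : M (q, i) = none → MemoAtHalts A w B q i M) : MemoAtHalts A w B q i M := by
  cases hMq : M (q, i) with
  | some j => exact ⟨_, _, _, .memoHit hMq⟩
  | none => exact h hMq

theorem branch (hF : q ∉ B.F) (hT : B.T q = .branch q' q'') (h : MemoAtRun A w B q' i M M₁ r s)
    (h' : r = .failure (A.nu q) → MemoAtHalts A w B q'' i M₁) : MemoAtHalts A w B q i M := by
  refine of_miss fun hMq => ?_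
  by_cases hr : r = .failure (A.nu q)
  · obtain ⟨M₂, r', s', h'⟩ := h' hr
    subst hr
    cases r' with
    | successAt => exact ⟨_, _, _, .branchBTSucc hMq hF hT h h'⟩
    | failure => exact ⟨_, _, _, .branchBTFail hMq hF hT h h'⟩
  · exact ⟨_, _, _, .branchNoBT hMq hF hT h fun _ hrj hj => hr (hj ▸ hrj)⟩

theorem sub (hF : q ∉ B.F) (hT : B.T q = .sub .at A' q')
    (h : MemoAtRun A w A' A'.q0 i M M₁ r s)
    (h' : ∀ i' K, r = .successAt i' K → MemoAtHalts A w B q' i' M₁) : MemoAtHalts A w B q i M := by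
  refine of_miss fun hMq => ?_
  cases r with
  | successAt i' K =>
    obtain ⟨M₂, r', s', h'⟩ := h' i' K rfl
    cases r' with
    | successAt => exact ⟨_, _, _, .subSuccSucc hMq hF hT h h'⟩
    | failure => exact ⟨_, _, _, .subSuccFail hMq hF hT h h'⟩
  | failure j =>
    rcases lt_or_ge (A.nu q) j with hj | hj
    · exact ⟨_, _, _, .subFailHigh hMq hF hT h hj⟩
    · exact ⟨_, _, _, .subFailLow hMq hF hT h hj⟩

end MemoAtHalts

theorem LAMatchRun.memoAtHalts {r : Result} {s : List (LaRunElem S)} (hWF : A.WF)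
    (hAt : A.IsAtNFA) (h : LAMatchRun w B q i r s) (hq : A.Located B ctx q)
    (hM : TableSound A w M) : MemoAtHalts A w B q i M := by
  induction h generalizing ctx M with
  | accept hF => exact .of_miss fun hMq => ⟨_, _, _, .accept hMq hF⟩
  | eps hF hT _ ih =>
    obtain ⟨_, _, _, h⟩ := ih (hq.eps hWF hF hT) hM
    exact .of_miss fun hMq => ⟨_, _, _, .eps hMq hF hT h⟩
  | branchSucc hF hT hr ih =>
    have hq' := hq.branch_left hWF hF hT
    obtain ⟨_, _, _, h⟩ := ih hq' hM
    refine .branch hF hT h ?_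
    rintro rfl
    have hf : FailsAt _ _ _ _ := (h.sound hWF hq' hM).result
    cases (hf.matches_failure (hq.nu_eq hWF).ge).deterministic ⟨_, hr⟩
  | branchFail hF hT _ _ ih ih' =>
    have hq' := hq.branch_left hWF hF hT
    obtain ⟨_, _, _, h⟩ := ih hq' hM
    exact .branch hF hT h fun _ => ih' (hq.branch_right hWF hF hT) (h.sound hWF hq' hM).table
  | charSucc hF hT hw _ ih =>
    obtain ⟨_, _, _, h⟩ := ih (hq.char hWF hF hT) hM
    exact .of_miss fun hMq => ⟨_, _, _, .charSucc hMq hF hT hw h⟩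
  | charFail hF hT hw => exact .of_miss fun hMq => ⟨_, _, _, .charFail hMq hF hT hw⟩
  | plaSucc hF hT => cases hq.kind_eq_at hAt hF hT
  | plaFail hF hT => cases hq.kind_eq_at hAt hF hT
  | atSucc hF hT hr _ ih ih' =>
    have hq' := hq.sub_q0 hWF hT
    obtain ⟨_, _, _, h⟩ := ih hq' hM
    refine .sub hF hT h ?_
    rintro i₁ K rfl
    have hs := h.sound hWF hq' hM
    cases hs.result.1.deterministic ⟨_, hr⟩
    exact ih' (hq.sub hWF hF hT) hs.table
  | atFail hF hT hr ih =>
    have hq' := hq.sub_q0 hWF hT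
    obtain ⟨_, _, _, h⟩ := ih hq' hM
    refine .sub hF hT h ?_
    rintro i₁ K rfl
    cases (h.sound hWF hq' hM).result.1.deterministic ⟨_, hr⟩

end Termination

theorem memoAt_correct_general [DecidableEq S] {A : SubNFA Sigma S} (hWF : A.WF)
    (hAt : A.IsAtNFA) {w : List Sigma} {q : S} (hq : q ∈ A.Q) (i : ℕ) {M : S × ℕ → Option ℕ}
    (hM : TableSound A w M) (r : Result) :
    (∃ s, LAMatchRun w A q i r s) ↔
      ∃ (M' : S × ℕ → Option ℕ) (ra : AtResult S) (s : List (AtRunElem S)),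
        MemoAtRun A w A q i M M' ra s ∧ ra.toResult = r := by
  have sound {M' ra s} (h : MemoAtRun A w A q i M M' ra s) : Matches w A q i ra.toResult :=
    (h.sound hWF ⟨.root, hq⟩ hM).result.matches_toResult
  constructor
  · rintro ⟨s, h⟩
    obtain ⟨M', ra, s', h'⟩ := h.memoAtHalts hWF hAt ⟨.root, hq⟩ hM
    exact ⟨M', ra, s', h', (sound h').deterministic ⟨s, h⟩⟩
  · rintro ⟨M', ra, s, h, rfl⟩
    exact sound h

/-- **Theorem 6** (correctness of `Memo-at`): for every at-NFA `A`, every input string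
`w`, and every position `i ∈ {0, …, |w|}`,
`Match-(la,at)_{A,w}(q0, i) = f(Memo-at^{M0}_{A,A,w}(q0, i))`, where `f` converts
results of `Memo-at` to results of `Match-(la,at)` by `f(Failure(j)) = Failure` and
`f(SuccessAt(i', K)) = SuccessAt(i')`. -/
theorem memoAt_correct {Sigma S : Type} [DecidableEq S]
    (A : SubNFA Sigma S) (hWF : A.WF) (hAt : A.IsAtNFA) (hLoop : A.NoEpsLoops)
    (w : List Sigma) (i : ℕ) (hi : i ≤ w.length) :
    ∀ r : Result,
      (∃ s, LAMatchRun w A A.q0 i r s) ↔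
        (∃ (M' : S × ℕ → Option ℕ) (ra : AtResult S) (s : List (AtRunElem S)),
          MemoAtRun A w A A.q0 i (fun _ => none) M' ra s ∧ ra.toResult = r) :=
  memoAt_correct_general hWF hAt (SubNFA.Located.q0 hWF .root).mem i (.empty A w)

end RegexMemo
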